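/- Let n ≥ 2, let Ω, Ω̃ ⊆ ℝⁿ be bounded, uniformly convex open domains with smooth boundary, with the closure of Ω̃ contained in the open unit ball B₁(0). Then there exists a constant C₃₇ > 0, depending only on Ω and Ω̃, such that for every strictly convex solution (u, c) of the second boundary value problem for the Lorentz mean curvature operator on (Ω, Ω̃), the Hessian of u is uniformly pinched: (1/C₃₇)|ξ|² ≤ ⟨ξ, D²u(x) ξ⟩ ≤ C₃₇|ξ|² for all x in the closure of Ω and all ξ ∈ ℝⁿ. -/

import Mathlib

noncomputable section
open MeasureTheory
open scoped RealInnerProductSpace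

/-- The `i`-th standard basis vector of `ℝⁿ`. -/
def ev (n : ℕ) (i : Fin n) : EuclideanSpace ℝ (Fin n) := EuclideanSpace.single i 1

/-- Lorentz mean curvature operator `M[u] x = ∑ i, ∂ᵢ (∂ᵢ u / √(1 - |∇u|²)) x`. -/
def MOp (n : ℕ) (u : EuclideanSpace ℝ (Fin n) → ℝ) (x : EuclideanSpace ℝ (Fin n)) : ℝ :=
  ∑ i : Fin n,
    fderiv ℝ (fun y => fderiv ℝ u y (ev n i) / Real.sqrt (1 - ‖gradient u y‖ ^ 2)) x (ev n i)

/-- Euclidean mean curvature operator `E[u] x = ∑ i, ∂ᵢ (∂ᵢ u / √(1 + |∇u|²)) x`. -/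
def EOp (n : ℕ) (u : EuclideanSpace ℝ (Fin n) → ℝ) (x : EuclideanSpace ℝ (Fin n)) : ℝ :=
  ∑ i : Fin n,
    fderiv ℝ (fun y => fderiv ℝ u y (ev n i) / Real.sqrt (1 + ‖gradient u y‖ ^ 2)) x (ev n i)

/-- `Ω` is a uniformly convex domain with smooth boundary, exhibited by the defining
function `h` with uniform concavity constant `θ`:  `h` is smooth, `Ω = {h > 0}`,
`|∇h| = 1` on `∂Ω`, and `⟨ξ, D²h(p) ξ⟩ ≤ -θ |ξ|²` for all `p, ξ`. -/
def IsUnifConvexDefFn (n : ℕ) (Ω : Set (EuclideanSpace ℝ (Fin n)))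
    (h : EuclideanSpace ℝ (Fin n) → ℝ) (θ : ℝ) : Prop :=
  ContDiff ℝ (⊤ : ℕ∞) h ∧ Ω = {p | 0 < h p} ∧
  (∀ p ∈ frontier Ω, ‖gradient h p‖ = 1) ∧ 0 < θ ∧
  ∀ p ξ : EuclideanSpace ℝ (Fin n), ⟪ξ, fderiv ℝ (gradient h) p ξ⟫ ≤ -θ * ‖ξ‖ ^ 2

/-- `u` is smooth on the closure of `Ω` (i.e. on an open neighbourhood of it). -/
def SmoothOnClosure (n : ℕ) (Ω : Set (EuclideanSpace ℝ (Fin n)))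
    (u : EuclideanSpace ℝ (Fin n) → ℝ) : Prop :=
  ∃ U : Set (EuclideanSpace ℝ (Fin n)), IsOpen U ∧ closure Ω ⊆ U ∧ ContDiffOn ℝ (⊤ : ℕ∞) u U

/-- `(u, c)` is a strictly convex solution of the second boundary value problem for the
Lorentz mean curvature operator on `(Ω, Ω')`: `u` is smooth up to the boundary, spacelike
(`|∇u| < 1`), has positive definite Hessian `D²u` on the closure of `Ω`, its gradient map
is a bijection from `Ω` onto `Ω'`, and `M[u] = c` on `Ω`. -/
def IsSol (n : ℕ) (Ω Ω' : Set (EuclideanSpace ℝ (Fin n)))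
    (u : EuclideanSpace ℝ (Fin n) → ℝ) (c : ℝ) : Prop :=
  SmoothOnClosure n Ω u ∧
  (∀ x ∈ closure Ω, ‖gradient u x‖ < 1) ∧
  (∀ x ∈ closure Ω, ∀ ξ : EuclideanSpace ℝ (Fin n), ξ ≠ 0 →
      0 < ⟪ξ, fderiv ℝ (gradient u) x ξ⟫) ∧
  Set.BijOn (gradient u) Ω Ω' ∧
  (∀ x ∈ Ω, MOp n u x = c)

/-- `(u, c)` is a strictly convex solution of the second boundary value problem for the
Euclidean mean curvature operator on `(Ω, Ω')`. -/
def IsSolE (n : ℕ) (Ω Ω' : Set (EuclideanSpace ℝ (Fin n)))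
    (u : EuclideanSpace ℝ (Fin n) → ℝ) (c : ℝ) : Prop :=
  SmoothOnClosure n Ω u ∧
  (∀ x ∈ closure Ω, ∀ ξ : EuclideanSpace ℝ (Fin n), ξ ≠ 0 →
      0 < ⟪ξ, fderiv ℝ (gradient u) x ξ⟫) ∧
  Set.BijOn (gradient u) Ω Ω' ∧
  (∀ x ∈ Ω, EOp n u x = c)

/-- `ut` is the Legendre transform of `u`: it is smooth up to the boundary of `Ω'`,
satisfies `ut (∇u x) = ⟨x, ∇u x⟩ - u x` and `∇ut (∇u x) = x` for `x ∈ Ω`. -/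
def IsLegendre (n : ℕ) (Ω Ω' : Set (EuclideanSpace ℝ (Fin n)))
    (u ut : EuclideanSpace ℝ (Fin n) → ℝ) : Prop :=
  SmoothOnClosure n Ω' ut ∧
  (∀ x ∈ Ω, ut (gradient u x) = ⟪x, gradient u x⟫ - u x) ∧
  (∀ x ∈ Ω, gradient ut (gradient u x) = x)

/-- The coefficient matrix `s_ij(p) = (δ_ij + pᵢpⱼ/(1 - |p|²)) / √(1 - |p|²)` of the
Lorentz mean curvature operator written in nondivergence form. -/
def sMat (n : ℕ) (p : EuclideanSpace ℝ (Fin n)) (i j : Fin n) : ℝ :=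
  ((if i = j then (1 : ℝ) else 0) + p i * p j / (1 - ‖p‖ ^ 2)) / Real.sqrt (1 - ‖p‖ ^ 2)

/-- `Ω` has smooth boundary: it is the superlevel set of a smooth function whose
gradient does not vanish on the boundary. -/
def HasSmoothBoundary (n : ℕ) (Ω : Set (EuclideanSpace ℝ (Fin n))) : Prop :=
  ∃ g : EuclideanSpace ℝ (Fin n) → ℝ, ContDiff ℝ (⊤ : ℕ∞) g ∧ Ω = {p | 0 < g p} ∧
    ∀ p ∈ frontier Ω, gradient g p ≠ 0

/-- `B(p) = Iₙ + p pᵀ / (v (1 + v))`, `v = √(1 - |p|²)`: the positive square root of the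
inverse induced metric of a spacelike graph with gradient `p`. -/
def sqB (n : ℕ) (p : EuclideanSpace ℝ (Fin n)) : Matrix (Fin n) (Fin n) ℝ :=
  1 + (Real.sqrt (1 - ‖p‖ ^ 2) * (1 + Real.sqrt (1 - ‖p‖ ^ 2)))⁻¹ •
      Matrix.of fun i j => p i * p j

/-- `B'(p) = Iₙ - p pᵀ / (1 + v)`, `v = √(1 - |p|²)`: the square root of the induced
metric of a spacelike graph with gradient `p`. -/
def sqBinv (n : ℕ) (p : EuclideanSpace ℝ (Fin n)) : Matrix (Fin n) (Fin n) ℝ :=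
  1 - (1 + Real.sqrt (1 - ‖p‖ ^ 2))⁻¹ • Matrix.of fun i j => p i * p j

/-!
The solution is unique up to an additive constant, so a single Hessian has to be pinched, and
compactness of `closure Ω` does that. For uniqueness let `(u, c)` and `(v, c')` be solutions with
`c' ≤ c`. Their gradients fill the same compact subset of the open unit ball, so `w = u - v`
satisfies a linear elliptic inequality `∑ aᵢⱼ ∂ᵢⱼw + K |∇w| ≥ 0` in `Ω`. The boundary condition
makes `∇w` vanish wherever `w` is maximal on `closure Ω`: at such a point `x` one has
`∇u(x) = ∇v(y)` for some `y ∈ closure Ω`, and the first order condition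
`⟪∇v(y) - ∇v(x), y - x⟫ ≤ 0` contradicts the strict monotonicity of `∇v` unless `y = x`. This is
incompatible with Hopf's lemma at the boundary, so the strong maximum principle makes `w` constant.
-/

section

open Filter InnerProductSpace Metric Set
open scoped Gradient NNReal Topology

theorem exists_touching_ball {X : Type*} [PseudoMetricSpace X] [ProperSpace X] {U V : Set X}
    (hU : IsOpen U) (hUc : IsPreconnected U) (hV : IsOpen V) (hUV : (U ∩ V).Nonempty)
    (hUV' : ¬U ⊆ V) :
    ∃ y ∈ V, ∃ x ∈ U \ V, closedBall y (dist x y) ⊆ U ∧ ball y (dist x y) ⊆ V := by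
  obtain ⟨q, ⟨hqcl, hqU⟩, hqV⟩ : ∃ q ∈ closure V ∩ U, q ∉ V := by
    by_contra! h
    exact hUV' (hUc.subset_of_closure_inter_subset hV hUV h)
  obtain ⟨r, hr, hrU⟩ := Metric.isOpen_iff.1 hU q hqU
  obtain ⟨y, hyV, hqy⟩ := Metric.mem_closure_iff.1 hqcl (r / 2) (half_pos hr)
  have hball : closedBall y (dist q y) ⊆ U :=
    (closedBall_subset_ball' (by rw [dist_comm y q]; linarith)).trans hrU
  obtain ⟨x, ⟨hxq, hxV⟩, hmin⟩ := ((isCompact_closedBall y (dist q y)).diff hV).exists_isMinOn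
    ⟨q, mem_closedBall.2 le_rfl, hqV⟩ (f := (dist · y)) (by fun_prop)
  refine ⟨y, hyV, x, ⟨hball hxq, hxV⟩, (closedBall_subset_closedBall hxq).trans hball, ?_⟩
  intro z hz
  by_contra hzV
  exact (mem_ball.1 hz).not_ge (hmin ⟨mem_closedBall.2 ((mem_ball.1 hz).le.trans hxq), hzV⟩)

section Hessian

theorem deriv_deriv_nonpos_of_isLocalMax {φ : ℝ → ℝ} {a : ℝ} (h : IsLocalMax φ a)
    (hφ : ContinuousAt φ a) : deriv (deriv φ) a ≤ 0 := by
  by_contra! hpos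
  have hmin : IsLocalMin φ a := isLocalMin_of_deriv_deriv_pos hpos h.deriv_eq_zero hφ
  have hconst : φ =ᶠ[𝓝 a] fun _ => φ a := by
    filter_upwards [h, hmin] with t hle hge using le_antisymm hle hge
  rw [hconst.deriv.deriv_eq] at hpos
  simp at hpos

theorem eventually_differentiableAt {F : Type*} [NormedAddCommGroup F] [NormedSpace ℝ F] {f : F → ℝ}
    {x : F} (hf : ContDiffAt ℝ 2 f x) :
    ∀ᶠ y in 𝓝 x, DifferentiableAt ℝ f y :=
  (hf.eventually (by simp)).mono fun _ hy => hy.differentiableAt two_ne_zero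

theorem hasDerivAt_add_smul {F : Type*} [NormedAddCommGroup F] [NormedSpace ℝ F] (x ξ : F)
    (t : ℝ) : HasDerivAt (fun s : ℝ => x + s • ξ) ξ t := by
  simpa using ((hasDerivAt_id t).smul_const ξ).const_add x

variable {E : Type*} [NormedAddCommGroup E] [InnerProductSpace ℝ E]

theorem hasDerivAt_inner_comp_add_smul {P : E → E} {x ξ : E} {t : ℝ}
    (hP : DifferentiableAt ℝ P (x + t • ξ)) :
    HasDerivAt (fun s : ℝ => ⟪P (x + s • ξ), ξ⟫) ⟪ξ, fderiv ℝ P (x + t • ξ) ξ⟫ t := by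
  have h := (hP.hasFDerivAt.comp_hasDerivAt t (hasDerivAt_add_smul x ξ t)).inner ℝ
    (hasDerivAt_const t ξ)
  rw [inner_zero_right, zero_add, real_inner_comm] at h
  exact h

theorem inner_sub_pos_of_fderiv_pos {P : E → E} {x y : E} {s : Set E} (hs : Convex ℝ s)
    (hP : ∀ z ∈ s, DifferentiableAt ℝ P z)
    (hpos : ∀ z ∈ s, ∀ ξ, ξ ≠ 0 → 0 < ⟪ξ, fderiv ℝ P z ξ⟫) (hx : x ∈ s) (hy : y ∈ s)
    (hxy : y ≠ x) : 0 < ⟪P y - P x, y - x⟫ := by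
  have hmem : ∀ t ∈ Icc (0 : ℝ) 1, x + t • (y - x) ∈ s := fun t ht =>
    hs.add_smul_sub_mem hx hy ht
  have hderiv : ∀ t ∈ Icc (0 : ℝ) 1, HasDerivAt (fun t : ℝ => ⟪P (x + t • (y - x)), y - x⟫)
      ⟪y - x, fderiv ℝ P (x + t • (y - x)) (y - x)⟫ t := fun t ht =>
    hasDerivAt_inner_comp_add_smul (hP _ (hmem t ht))
  obtain ⟨t, ht, hslope⟩ := exists_hasDerivAt_eq_slope _ _ zero_lt_one
    (fun t ht => (hderiv t ht).continuousAt.continuousWithinAt)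
    (fun t ht => hderiv t (Ioo_subset_Icc_self ht))
  have h := hpos _ (hmem t (Ioo_subset_Icc_self ht)) (y - x) (sub_ne_zero.2 hxy)
  rw [hslope] at h
  simpa [inner_sub_left] using h

variable [CompleteSpace E] {f g : E → ℝ} {x y ξ : E}

theorem contDiffAt_gradient {m : WithTop ℕ∞} (hf : ContDiffAt ℝ (m + 1) f x) :
    ContDiffAt ℝ m (∇ f) x :=
  (toDual ℝ E).symm.contDiff.contDiffAt.comp x (hf.fderiv_right le_rfl)

theorem differentiableAt_gradient (hf : ContDiffAt ℝ 2 f x) : DifferentiableAt ℝ (∇ f) x :=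
  (contDiffAt_gradient (m := 1) (by simpa [one_add_one_eq_two])).differentiableAt one_ne_zero

theorem gradient_sub (hf : DifferentiableAt ℝ f x) (hg : DifferentiableAt ℝ g x) :
    ∇ (f - g) x = ∇ f x - ∇ g x := by
  simp only [gradient, fderiv_sub hf hg, map_sub]

theorem fderiv_gradient_sub (hf : ContDiffAt ℝ 2 f x) (hg : ContDiffAt ℝ 2 g x) :
    fderiv ℝ (∇ (f - g)) x = fderiv ℝ (∇ f) x - fderiv ℝ (∇ g) x := by
  have h : ∇ (f - g) =ᶠ[𝓝 x] ∇ f - ∇ g := by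
    filter_upwards [eventually_differentiableAt hf, eventually_differentiableAt hg] with y hfy hgy
      using gradient_sub hfy hgy
  rw [h.fderiv_eq, fderiv_sub (differentiableAt_gradient hf) (differentiableAt_gradient hg)]

theorem deriv_comp_add_smul {t : ℝ} (hf : DifferentiableAt ℝ f (x + t • ξ)) :
    deriv (fun s : ℝ => f (x + s • ξ)) t = ⟪∇ f (x + t • ξ), ξ⟫ := by
  rw [inner_gradient_left]
  exact (hf.hasFDerivAt.comp_hasDerivAt t (hasDerivAt_add_smul x ξ t)).deriv

theorem hasDerivAt_deriv_comp_add_smul {t : ℝ} (hf : ContDiffAt ℝ 2 f (x + t • ξ)) :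
    HasDerivAt (deriv fun s : ℝ => f (x + s • ξ)) ⟪ξ, fderiv ℝ (∇ f) (x + t • ξ) ξ⟫ t := by
  have hline := (hasDerivAt_add_smul x ξ t).continuousAt.eventually (eventually_differentiableAt hf)
  exact (hasDerivAt_inner_comp_add_smul (differentiableAt_gradient hf)).congr_of_eventuallyEq
    (hline.mono fun s hs => deriv_comp_add_smul hs)

theorem gradient_eq_zero_of_isLocalMax (h : IsLocalMax f x) : ∇ f x = 0 := by
  simp only [gradient, h.fderiv_eq_zero, map_zero]

theorem inner_fderiv_gradient_nonpos_of_isLocalMax (hf : ContDiffAt ℝ 2 f x)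
    (h : IsLocalMax f x) (ξ : E) : ⟪ξ, fderiv ℝ (∇ f) x ξ⟫ ≤ 0 := by
  have hline : Tendsto (fun s : ℝ => x + s • ξ) (𝓝 0) (𝓝 x) := by
    simpa using (hasDerivAt_add_smul x ξ 0).continuousAt.tendsto
  have hmax : IsLocalMax (fun s : ℝ => f (x + s • ξ)) 0 := by
    simpa [IsLocalMax, IsMaxFilter] using hline.eventually h
  have hx : x + (0 : ℝ) • ξ = x := by simp
  have hcont : ContinuousAt (fun s : ℝ => f (x + s • ξ)) 0 :=
    ContinuousAt.comp (g := f) (by simpa only [hx] using hf.continuousAt)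
      (hasDerivAt_add_smul x ξ 0).continuousAt
  have hderiv := (hasDerivAt_deriv_comp_add_smul (ξ := ξ) (t := 0) (by rwa [hx])).deriv
  rw [← hx, ← hderiv]
  exact deriv_deriv_nonpos_of_isLocalMax hmax hcont

theorem concaveOn_univ_of_inner_fderiv_gradient_nonpos (hf : ContDiff ℝ 2 f)
    (h : ∀ x ξ, ⟪ξ, fderiv ℝ (∇ f) x ξ⟫ ≤ 0) : ConcaveOn ℝ univ f := by
  refine ⟨convex_univ, fun x _ y _ a b ha hb hab => ?_⟩
  have hφ : ConcaveOn ℝ univ fun t : ℝ => f (x + t • (y - x)) := by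
    refine concaveOn_univ_of_deriv2_nonpos ?_ (fun t =>
      (hasDerivAt_deriv_comp_add_smul hf.contDiffAt).differentiableAt) fun t => ?_
    · have := hf.differentiable two_ne_zero
      fun_prop
    · exact (hasDerivAt_deriv_comp_add_smul hf.contDiffAt).deriv.trans_le (h _ _)
  have hxy : a • x + b • y = x + b • (y - x) := by
    rw [← eq_sub_iff_add_eq] at hab
    rw [hab]; module
  simpa [hxy] using hφ.2 (mem_univ 0) (mem_univ 1) ha hb hab

theorem gradient_eq_of_isMaxOn_sub {s : Set E} (hs : Convex ℝ s)
    (hf : DifferentiableAt ℝ f x) (hg : DifferentiableAt ℝ g x)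
    (hg' : ∀ z ∈ s, DifferentiableAt ℝ (∇ g) z)
    (hpos : ∀ z ∈ s, ∀ ξ, ξ ≠ 0 → 0 < ⟪ξ, fderiv ℝ (∇ g) z ξ⟫) (hx : x ∈ s)
    (hfg : ∇ f x ∈ ∇ g '' s) (hmax : IsMaxOn (f - g) s x) : ∇ f x = ∇ g x := by
  obtain ⟨y, hy, hgy⟩ := hfg
  by_contra hne
  have hyx : y ≠ x := by rintro rfl; exact hne hgy.symm
  have hmono := inner_sub_pos_of_fderiv_pos hs hg' hpos hx hy hyx
  have hdir := hmax.localize.hasFDerivWithinAt_nonpos (hf.sub hg).hasFDerivAt.hasFDerivWithinAt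
    (sub_mem_posTangentConeAt_of_segment_subset (hs.segment_subset hx hy))
  rw [← inner_gradient_left, gradient_sub hf hg, ← hgy] at hdir
  exact hdir.not_gt hmono

end Hessian
section InteriorBall

variable {E : Type*} [NormedAddCommGroup E] [InnerProductSpace ℝ E]

/-- The interior ball (sphere) condition: every frontier point of `Ω` lies on the boundary sphere
of a nondegenerate open ball contained in `Ω`. -/
def InteriorBallCondition (Ω : Set E) : Prop :=
  ∀ x ∈ frontier Ω, ∃ y, y ≠ x ∧ ball y (dist x y) ⊆ Ω

variable [CompleteSpace E] {f : E → ℝ} {x : E}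

theorem exists_eventually_abs_sub_sub_inner_gradient_le (hf : ContDiffAt ℝ 2 f x) :
    ∃ K : ℝ≥0, ∀ᶠ z in 𝓝 x, |f z - f x - ⟪∇ f x, z - x⟫| ≤ K * ‖z - x‖ ^ 2 := by
  obtain ⟨K, t, ht, hLip⟩ := (contDiffAt_gradient (m := 1)
    (by simpa [one_add_one_eq_two] using hf)).exists_lipschitzOnWith
  obtain ⟨δ, hδ, hball⟩ := Metric.eventually_nhds_iff_ball.1
    ((eventually_mem_set.2 ht).and (eventually_differentiableAt hf))
  refine ⟨K, Metric.eventually_nhds_iff_ball.2 ⟨δ, hδ, fun z hz => ?_⟩⟩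
  have hsub : closedBall x ‖z - x‖ ⊆ ball x δ :=
    closedBall_subset_ball (by rwa [← dist_eq_norm])
  have hbound : ∀ y ∈ closedBall x ‖z - x‖, ‖fderiv ℝ f y - fderiv ℝ f x‖ ≤ K * ‖z - x‖ := by
    intro y hy
    have h := hLip.dist_le_mul y (hball y (hsub hy)).1 x (mem_of_mem_nhds ht)
    rw [gradient, gradient, LinearIsometryEquiv.dist_map, dist_eq_norm] at h
    exact h.trans (mul_le_mul_of_nonneg_left hy K.2)
  have hmv := (convex_closedBall x ‖z - x‖).norm_image_sub_le_of_norm_fderiv_le'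
    (fun y hy => (hball y (hsub hy)).2) hbound (mem_closedBall_self (norm_nonneg _))
    (mem_closedBall_iff_norm.2 le_rfl)
  rw [inner_gradient_left, sq, ← mul_assoc]
  exact hmv

theorem exists_ball_subset_setOf_pos (hf : ContDiffAt ℝ 2 f x) (hx : f x = 0)
    (hgrad : ∇ f x ≠ 0) : ∃ y, y ≠ x ∧ ball y (dist x y) ⊆ {z | 0 < f z} := by
  set G := ∇ f x
  obtain ⟨K, hK⟩ := exists_eventually_abs_sub_sub_inner_gradient_le hf
  obtain ⟨δ, hδ, hKδ⟩ := Metric.eventually_nhds_iff_ball.1 hK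
  obtain ⟨R, hRδ, hRK, hR⟩ : ∃ R : ℝ, 2 * R * ‖G‖ < δ ∧ 2 * R * K < 1 ∧ 0 < R := by
    have hsmall : ∀ a ε : ℝ, 0 < ε → ∀ᶠ R : ℝ in 𝓝[>] 0, 2 * R * a < ε := fun a ε hε =>
      have hlim : Tendsto (fun R : ℝ => 2 * R * a) (𝓝 0) (𝓝 0) :=
        Continuous.tendsto' (by fun_prop) _ _ (by simp)
      (hlim.mono_left nhdsWithin_le_nhds).eventually_lt_const hε
    exact ((hsmall _ _ hδ).and ((hsmall _ _ one_pos).and self_mem_nhdsWithin)).exists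
  have hRG : ‖R • G‖ = R * ‖G‖ := by rw [norm_smul, Real.norm_of_nonneg hR.le]
  refine ⟨x + R • G, by simp [hR.ne', hgrad], fun z hz => ?_⟩
  rw [mem_ball, dist_self_add_right, dist_eq_norm, ← sub_sub] at hz
  have hzδ : z ∈ ball x δ := by
    rw [mem_ball, dist_eq_norm]
    linarith [norm_le_norm_sub_add (z - x) (R • G)]
  have hinner : ‖z - x‖ ^ 2 < 2 * R * ⟪G, z - x⟫ := by
    have h := pow_lt_pow_left₀ hz (norm_nonneg _) two_ne_zero
    rw [norm_sub_sq_real, inner_smul_right, real_inner_comm] at h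
    linarith
  have htaylor : ⟪G, z - x⟫ - K * ‖z - x‖ ^ 2 ≤ f z := by
    linarith [(abs_le.1 (hKδ z hzδ)).1]
  have hpos : 0 < 2 * R * f z :=
    calc 0 ≤ ‖z - x‖ ^ 2 * (1 - 2 * R * K) := mul_nonneg (by positivity) (by linarith)
      _ < 2 * R * (⟪G, z - x⟫ - K * ‖z - x‖ ^ 2) := by linarith
      _ ≤ 2 * R * f z := by gcongr
  exact pos_of_mul_pos_right hpos (by positivity)

end InteriorBall

section UniformlyConvexDomain

variable {n : ℕ} {Ω : Set (EuclideanSpace ℝ (Fin n))} {g : EuclideanSpace ℝ (Fin n) → ℝ} {θ : ℝ}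

theorem IsUnifConvexDefFn.isOpen (hΩ : IsUnifConvexDefFn n Ω g θ) : IsOpen Ω := by
  obtain ⟨hg, rfl, -⟩ := hΩ
  exact isOpen_lt continuous_const hg.continuous

theorem IsUnifConvexDefFn.convex (hΩ : IsUnifConvexDefFn n Ω g θ) : Convex ℝ Ω := by
  obtain ⟨hg, rfl, -, hθ, hhess⟩ := hΩ
  have hconcave : ConcaveOn ℝ univ g :=
    concaveOn_univ_of_inner_fderiv_gradient_nonpos (contDiff_infty.1 hg 2) fun p ξ =>
      (hhess p ξ).trans (mul_nonpos_of_nonpos_of_nonneg (neg_nonpos.2 hθ.le) (sq_nonneg _))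
  simpa using hconcave.convex_gt 0

theorem IsUnifConvexDefFn.interiorBallCondition (hΩ : IsUnifConvexDefFn n Ω g θ) :
    InteriorBallCondition Ω := by
  obtain ⟨hg, rfl, hgrad, -⟩ := hΩ
  intro x hx
  have hx0 : g x = 0 := (frontier_lt_subset_eq continuous_const hg.continuous hx).symm
  exact exists_ball_subset_setOf_pos (contDiff_infty.1 hg 2).contDiffAt hx0
    (norm_ne_zero_iff.1 (by simp [hgrad x hx]))

end UniformlyConvexDomain

theorem exists_pinching_of_isCompact {E X : Type*} [NormedAddCommGroup E] [InnerProductSpace ℝ E]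
    [FiniteDimensional ℝ E] [TopologicalSpace X] {s : Set X} {H : X → E →L[ℝ] E}
    (hs : IsCompact s) (hH : ContinuousOn H s)
    (hpos : ∀ x ∈ s, ∀ ξ, ξ ≠ 0 → 0 < ⟪ξ, H x ξ⟫) :
    ∃ C : ℝ, 0 < C ∧ ∀ x ∈ s, ∀ ξ,
      1 / C * ‖ξ‖ ^ 2 ≤ ⟪ξ, H x ξ⟫ ∧ ⟪ξ, H x ξ⟫ ≤ C * ‖ξ‖ ^ 2 := by
  have hcont : ContinuousOn (fun q : X × E => ⟪q.2, H q.1 q.2⟫) (s ×ˢ sphere 0 1) :=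
    continuousOn_snd.inner (𝕜 := ℝ)
      ((hH.comp continuousOn_fst fun q hq => hq.1).clm_apply continuousOn_snd)
  obtain ⟨a, ha, hlower⟩ := (hs.prod (isCompact_sphere (0 : E) 1)).exists_forall_le' hcont
    (a := 0) fun q hq => hpos q.1 hq.1 q.2 (ne_of_mem_sphere hq.2 one_ne_zero)
  obtain ⟨b, hupper⟩ := hs.exists_bound_of_continuousOn hH
  have hC : 0 < max a⁻¹ b := lt_max_of_lt_left (inv_pos.2 ha)
  refine ⟨max a⁻¹ b, hC, fun x hx ξ => ⟨?_, ?_⟩⟩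
  · have hunit : a * ‖ξ‖ ^ 2 ≤ ⟪ξ, H x ξ⟫ := by
      rcases eq_or_ne ξ 0 with rfl | hξ
      · simp
      have hn : 0 < ‖ξ‖ := norm_pos_iff.2 hξ
      have h := hlower (x, ‖ξ‖⁻¹ • ξ) ⟨hx, by simp [norm_smul, hn.ne']⟩
      simp only [map_smul, real_inner_smul_left, real_inner_smul_right] at h
      calc a * ‖ξ‖ ^ 2 ≤ (‖ξ‖⁻¹ * (‖ξ‖⁻¹ * ⟪ξ, H x ξ⟫)) * ‖ξ‖ ^ 2 := by gcongr
        _ = ⟪ξ, H x ξ⟫ := by field_simp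
    refine le_trans ?_ hunit
    gcongr
    rw [one_div]
    exact inv_le_of_inv_le₀ ha (le_max_left _ _)
  · calc ⟪ξ, H x ξ⟫ ≤ ‖ξ‖ * ‖H x ξ‖ := real_inner_le_norm _ _
      _ ≤ ‖ξ‖ * (max a⁻¹ b * ‖ξ‖) := by
          gcongr
          exact (H x).le_of_opNorm_le ((hupper x hx).trans (le_max_right _ _)) ξ
      _ = max a⁻¹ b * ‖ξ‖ ^ 2 := by ring

section HopfBarrier

variable {E : Type*} [NormedAddCommGroup E]

/-- The radial barrier of the Hopf lemma. -/
def hopfBarrier (ε α : ℝ) (y₀ y : E) : ℝ := -ε * Real.exp (-α * ‖y - y₀‖ ^ 2)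

theorem hopfBarrier_neg {ε : ℝ} (hε : 0 < ε) (α : ℝ) (y₀ y : E) : hopfBarrier ε α y₀ y < 0 :=
  mul_neg_of_neg_of_pos (neg_neg_of_pos hε) (Real.exp_pos _)

theorem neg_le_hopfBarrier {ε α : ℝ} (hε : 0 ≤ ε) (hα : 0 ≤ α) (y₀ y : E) :
    -ε ≤ hopfBarrier ε α y₀ y := by
  have h : Real.exp (-α * ‖y - y₀‖ ^ 2) ≤ 1 :=
    Real.exp_le_one_iff.2 (mul_nonpos_of_nonpos_of_nonneg (neg_nonpos.2 hα) (sq_nonneg _))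
  rw [hopfBarrier]
  nlinarith

variable [InnerProductSpace ℝ E]

theorem contDiff_hopfBarrier (ε α : ℝ) (y₀ : E) {m : WithTop ℕ∞} :
    ContDiff ℝ m (hopfBarrier ε α y₀) :=
  contDiff_const.mul (contDiff_const.mul ((contDiff_id.sub contDiff_const).norm_sq ℝ)).exp

theorem hasFDerivAt_exp_neg_mul_norm_sub_sq (α : ℝ) (y₀ x : E) :
    HasFDerivAt (fun y => Real.exp (-α * ‖y - y₀‖ ^ 2))
      ((-2 * α * Real.exp (-α * ‖x - y₀‖ ^ 2)) • innerSL ℝ (x - y₀)) x := by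
  refine (((hasFDerivAt_id x).sub_const y₀).norm_sq.const_mul (-α)).exp.congr_fderiv ?_
  ext ξ
  simp only [id_eq, neg_mul, map_sub, ContinuousLinearMap.comp_id, neg_smul, smul_neg, neg_apply,
    smul_apply, sub_apply, coe_innerSL_apply, nsmul_eq_mul, Nat.cast_ofNat, smul_eq_mul, neg_inj]
  ring

variable [CompleteSpace E]

theorem gradient_hopfBarrier (ε α : ℝ) (y₀ : E) :
    ∇ (hopfBarrier ε α y₀) =
      fun x => (2 * α * ε * Real.exp (-α * ‖x - y₀‖ ^ 2)) • (x - y₀) := by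
  funext x
  refine HasGradientAt.gradient (hasGradientAt_iff_hasFDerivAt.2 ?_)
  refine ((hasFDerivAt_exp_neg_mul_norm_sub_sq α y₀ x).const_mul (-ε)).congr_fderiv ?_
  ext ξ
  simp only [neg_mul, map_sub, neg_smul, smul_neg, neg_neg, smul_apply, sub_apply,
    coe_innerSL_apply, smul_eq_mul, map_smul, toDual_apply_apply]
  ring

theorem fderiv_gradient_hopfBarrier (ε α : ℝ) (y₀ x : E) :
    fderiv ℝ (∇ (hopfBarrier ε α y₀)) x = (2 * α * ε * Real.exp (-α * ‖x - y₀‖ ^ 2)) •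
      (.id ℝ E - (2 * α) • rankOne ℝ (x - y₀) (x - y₀)) := by
  rw [gradient_hopfBarrier]
  refine HasFDerivAt.fderiv ?_
  refine (((hasFDerivAt_exp_neg_mul_norm_sub_sq α y₀ x).const_mul (2 * α * ε)).smul
    ((hasFDerivAt_id x).sub_const y₀)).congr_fderiv ?_
  ext ξ
  simp only [neg_mul, map_sub, neg_smul, smul_neg, id_eq, add_apply, smul_apply,
    ContinuousLinearMap.id_apply, ContinuousLinearMap.smulRight_apply, neg_apply, sub_apply,
    coe_innerSL_apply, smul_eq_mul, rankOne_apply]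
  module

end HopfBarrier

section Elliptic

variable {E : Type*} [NormedAddCommGroup E] [InnerProductSpace ℝ E]

/-- `L` acts on Hessians as a linear second order operator with frozen coefficients,
`L H = tr (A H)` with `A ≥ lam` and `tr A ≤ Lam`. -/
structure IsElliptic (lam Lam : ℝ) (L : (E →L[ℝ] E) →ₗ[ℝ] ℝ) : Prop where
  nonneg : ∀ H, (∀ ξ, 0 ≤ ⟪ξ, H ξ⟫) → 0 ≤ L H
  rankOne_ge : ∀ ξ, lam * ‖ξ‖ ^ 2 ≤ L (rankOne ℝ ξ ξ)
  id_le : L (.id ℝ E) ≤ Lam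

section Complete

variable [CompleteSpace E]

/-- `w` satisfies at `x` the differential inequality `∑ aᵢⱼ ∂ᵢⱼw + K |∇w| ≥ 0` for some
coefficients `aᵢⱼ` with ellipticity constants `lam`, `Lam`, which may depend on `w` and `x`. -/
def IsEllipticSubsolutionAt (lam Lam : ℝ) (K : ℝ≥0) (w : E → ℝ) (x : E) : Prop :=
  ContDiffAt ℝ 2 w x ∧ ∃ L, IsElliptic lam Lam L ∧ -(K * ‖∇ w x‖) ≤ L (fderiv ℝ (∇ w) x)

variable {lam Lam ε α R : ℝ} {K : ℝ≥0} {w f : E → ℝ} {x x₀ y₀ : E}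

theorem IsElliptic.fderiv_gradient_hopfBarrier_le {L : (E →L[ℝ] E) →ₗ[ℝ] ℝ}
    (hL : IsElliptic lam Lam L) (hε : 0 ≤ ε) (hα : 0 ≤ α) (y₀ x : E) :
    L (fderiv ℝ (∇ (hopfBarrier ε α y₀)) x) ≤
      2 * α * ε * Real.exp (-α * ‖x - y₀‖ ^ 2) * (Lam - 2 * α * (lam * ‖x - y₀‖ ^ 2)) := by
  rw [fderiv_gradient_hopfBarrier, map_smul, map_sub, map_smul, smul_eq_mul, smul_eq_mul]
  gcongr
  exacts [hL.id_le, hL.rankOne_ge _]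

theorem IsElliptic.le_of_isLocalMax_sub {L : (E →L[ℝ] E) →ₗ[ℝ] ℝ} (hL : IsElliptic lam Lam L)
    (hw : ContDiffAt ℝ 2 w x) (hf : ContDiffAt ℝ 2 f x) (hmax : IsLocalMax (w - f) x) :
    L (fderiv ℝ (∇ w) x) ≤ L (fderiv ℝ (∇ f) x) := by
  rw [← sub_nonneg, ← map_sub]
  refine hL.nonneg _ fun ξ => ?_
  have hwf : ContDiffAt ℝ 2 (w - f) x := hw.sub hf
  have h := inner_fderiv_gradient_nonpos_of_isLocalMax hwf hmax ξ
  rw [fderiv_gradient_sub hw hf] at h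
  rwa [← neg_sub, neg_apply, inner_neg_right, neg_nonneg]

theorem IsEllipticSubsolutionAt.not_isLocalMax_sub_hopfBarrier
    (hw : IsEllipticSubsolutionAt lam Lam K w x) (hε : 0 < ε) (hα : 0 < α)
    (hx : Lam + K * ‖x - y₀‖ < 2 * α * (lam * ‖x - y₀‖ ^ 2)) :
    ¬IsLocalMax (w - hopfBarrier ε α y₀) x := by
  obtain ⟨hw2, L, hL, hLw⟩ := hw
  intro hmax
  have hφ : ContDiffAt ℝ 2 (hopfBarrier ε α y₀) x := (contDiff_hopfBarrier ε α y₀).contDiffAt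
  have hgrad : ∇ w x = ∇ (hopfBarrier ε α y₀) x := by
    rw [← sub_eq_zero, ← gradient_sub (hw2.differentiableAt two_ne_zero)
      (hφ.differentiableAt two_ne_zero), gradient_eq_zero_of_isLocalMax hmax]
  set A := 2 * α * ε * Real.exp (-α * ‖x - y₀‖ ^ 2) with hA
  have hApos : 0 < A := by positivity
  have hnorm : ‖∇ w x‖ = A * ‖x - y₀‖ := by
    rw [hgrad, gradient_hopfBarrier, norm_smul, ← hA, Real.norm_of_nonneg hApos.le]
  have hle : -(K * (A * ‖x - y₀‖)) ≤ A * (Lam - 2 * α * (lam * ‖x - y₀‖ ^ 2)) :=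
    calc -(K * (A * ‖x - y₀‖)) ≤ L (fderiv ℝ (∇ w) x) := hnorm ▸ hLw
      _ ≤ L (fderiv ℝ (∇ (hopfBarrier ε α y₀)) x) := hL.le_of_isLocalMax_sub hw2 hφ hmax
      _ ≤ _ := hL.fderiv_gradient_hopfBarrier_le hε.le hα.le y₀ x
  have hneg := mul_neg_of_pos_of_neg hApos (sub_neg.2 hx)
  linarith

theorem inner_gradient_nonneg_of_isMaxOn_annulus (hx₀ : x₀ ∈ sphere y₀ R)
    (hf : DifferentiableAt ℝ f x₀) (hmax : IsMaxOn f (closedBall y₀ R \ ball y₀ (R / 2)) x₀) :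
    0 ≤ ⟪∇ f x₀, x₀ - y₀⟫ := by
  rw [mem_sphere_iff_norm] at hx₀
  have hR : 0 ≤ R := hx₀ ▸ norm_nonneg _
  have htan : -(2 : ℝ)⁻¹ • (x₀ - y₀) ∈ posTangentConeAt (closedBall y₀ R \ ball y₀ (R / 2)) x₀ := by
    refine mem_posTangentConeAt_of_segment_subset fun x hx => ?_
    rw [segment_eq_image'] at hx
    obtain ⟨t, ⟨ht0, ht1⟩, rfl⟩ := hx
    have hdist : ‖x₀ + t • (x₀ + -(2 : ℝ)⁻¹ • (x₀ - y₀) - x₀) - y₀‖ = (1 - t / 2) * R := by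
      rw [show x₀ + t • (x₀ + -(2 : ℝ)⁻¹ • (x₀ - y₀) - x₀) - y₀ = (1 - t / 2) • (x₀ - y₀) by module,
        norm_smul, hx₀, Real.norm_of_nonneg (by linarith)]
    rw [Set.mem_sdiff, mem_closedBall_iff_norm, mem_ball_iff_norm, hdist]
    constructor <;> nlinarith
  have h := hmax.localize.hasFDerivWithinAt_nonpos hf.hasFDerivAt.hasFDerivWithinAt htan
  rw [← inner_gradient_left, inner_smul_right] at h
  linarith

end Complete

variable [FiniteDimensional ℝ E] {lam Lam ε α R : ℝ} {K : ℝ≥0} {w : E → ℝ} {x₀ y₀ : E} {Ω : Set E}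

theorem isMaxOn_sub_hopfBarrier (hlam : 0 ≤ lam) (hε : 0 < ε) (hα : 0 < α) (hR : 0 < R)
    (hαR : Lam + K * R < 2 * α * (lam * (R / 2) ^ 2)) (hx₀ : x₀ ∈ sphere y₀ R)
    (hcont : ContinuousOn w (closedBall y₀ R))
    (hsub : ∀ x ∈ ball y₀ R, IsEllipticSubsolutionAt lam Lam K w x)
    (hle : ∀ x ∈ closedBall y₀ R, w x ≤ w x₀)
    (hinner : ∀ x ∈ closedBall y₀ (R / 2), w x + ε ≤ w x₀) :
    IsMaxOn (w - hopfBarrier ε α y₀) (closedBall y₀ R \ ball y₀ (R / 2)) x₀ := by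
  have hx₀R := mem_sphere_iff_norm.1 hx₀
  obtain ⟨x, ⟨hxR, hxR'⟩, hmax⟩ := ((isCompact_closedBall y₀ R).diff
    (isOpen_ball (x := y₀) (ε := R / 2))).exists_isMaxOn
    ⟨x₀, sphere_subset_closedBall hx₀, by rw [mem_ball, mem_sphere.1 hx₀]; linarith⟩
    ((hcont.sub (contDiff_hopfBarrier ε α y₀ (m := 0)).continuous.continuousOn).mono sdiff_subset)
  suffices h : (w - hopfBarrier ε α y₀) x ≤ (w - hopfBarrier ε α y₀) x₀ from
    fun z hz => (hmax hz).trans h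
  simp only [Pi.sub_apply]
  by_cases hxin : x ∈ closedBall y₀ (R / 2)
  · linarith [hinner x hxin, neg_le_hopfBarrier hε.le hα.le y₀ x, hopfBarrier_neg hε α y₀ x₀]
  rcases (mem_closedBall.1 hxR).eq_or_lt with hxout | hxball
  · rw [dist_eq_norm] at hxout
    simpa only [hopfBarrier, hxout, hx₀R, sub_le_sub_iff_right] using hle x hxR
  have hlocal : IsLocalMax (w - hopfBarrier ε α y₀) x := hmax.isLocalMax <|
    mem_of_superset ((isOpen_ball.sdiff isClosed_closedBall).mem_nhds ⟨hxball, hxin⟩)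
      (sdiff_subset_sdiff ball_subset_closedBall ball_subset_closedBall)
  refine absurd hlocal ((hsub x hxball).not_isLocalMax_sub_hopfBarrier hε hα ?_)
  rw [mem_closedBall_iff_norm] at hxR hxin
  calc Lam + K * ‖x - y₀‖ ≤ Lam + K * R := by gcongr
    _ < 2 * α * (lam * (R / 2) ^ 2) := hαR
    _ ≤ 2 * α * (lam * ‖x - y₀‖ ^ 2) := by gcongr; exact (not_le.1 hxin).le

theorem inner_gradient_pos_of_isEllipticSubsolutionAt (hlam : 0 < lam) (hR : 0 < R)
    (hx₀ : x₀ ∈ sphere y₀ R) (hdiff : ∀ x ∈ closedBall y₀ R, DifferentiableAt ℝ w x)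
    (hsub : ∀ x ∈ ball y₀ R, IsEllipticSubsolutionAt lam Lam K w x)
    (hlt : ∀ x ∈ ball y₀ R, w x < w x₀) : 0 < ⟪∇ w x₀, x₀ - y₀⟫ := by
  have hcont : ContinuousOn w (closedBall y₀ R) := fun x hx =>
    (hdiff x hx).continuousAt.continuousWithinAt
  have hle : ∀ x ∈ closedBall y₀ R, w x ≤ w x₀ := by
    rw [← closure_ball y₀ hR.ne'] at hcont ⊢
    exact fun x hx => le_on_closure (fun x hx => (hlt x hx).le) hcont continuousOn_const hx
  have hhalf : R / 2 < R := half_lt_self hR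
  obtain ⟨z, hz, hzmax⟩ := (isCompact_closedBall y₀ (R / 2)).exists_isMaxOn
    ⟨y₀, mem_closedBall_self (by positivity)⟩
    (hcont.mono (closedBall_subset_closedBall hhalf.le))
  have hε : 0 < w x₀ - w z := sub_pos.2 (hlt z (closedBall_subset_ball hhalf hz))
  obtain ⟨α, hα, hαR⟩ : ∃ α : ℝ, 0 < α ∧ Lam + K * R < 2 * α * (lam * (R / 2) ^ 2) := by
    have hlim : Tendsto (fun α : ℝ => 2 * α * (lam * (R / 2) ^ 2)) atTop atTop :=
      (tendsto_id.const_mul_atTop two_pos).atTop_mul_const (by positivity)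
    exact ((eventually_gt_atTop 0).and (hlim.eventually_gt_atTop _)).exists
  have hmax := isMaxOn_sub_hopfBarrier hlam.le hε hα hR hαR hx₀ hcont hsub hle
    fun x hx => by linarith [show w x ≤ w z from hzmax hx]
  have hwx₀ := hdiff x₀ (sphere_subset_closedBall hx₀)
  have hφ := (contDiff_hopfBarrier (w x₀ - w z) α y₀ (m := 1)).differentiable one_ne_zero
  have h := inner_gradient_nonneg_of_isMaxOn_annulus hx₀ (hwx₀.sub hφ.differentiableAt) hmax
  rw [gradient_sub hwx₀ hφ.differentiableAt, inner_sub_left, gradient_hopfBarrier,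
    real_inner_smul_left, real_inner_self_eq_norm_sq, mem_sphere_iff_norm.1 hx₀] at h
  have hpos : 0 < 2 * α * (w x₀ - w z) * Real.exp (-α * R ^ 2) * R ^ 2 := by positivity
  linarith

theorem eq_of_isMaxOn_of_isEllipticSubsolutionAt (hlam : 0 < lam) (hΩ : IsOpen Ω)
    (hΩc : IsPreconnected Ω) (hsub : ∀ x ∈ Ω, IsEllipticSubsolutionAt lam Lam K w x)
    (hx₀ : x₀ ∈ Ω) (hmax : IsMaxOn w Ω x₀) : ∀ x ∈ Ω, w x = w x₀ := by
  have hdiff : ∀ x ∈ Ω, DifferentiableAt ℝ w x := fun x hx =>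
    (hsub x hx).1.differentiableAt two_ne_zero
  have hcont : ContinuousOn w Ω := fun x hx => (hdiff x hx).continuousAt.continuousWithinAt
  have hV : IsOpen (Ω ∩ w ⁻¹' Iio (w x₀)) := hcont.isOpen_inter_preimage hΩ isOpen_Iio
  by_contra! ⟨z, hz, hzne⟩
  obtain ⟨y, hy, x, ⟨hxΩ, hxV⟩, hball, hballV⟩ := exists_touching_ball hΩ hΩc hV
    ⟨z, hz, hz, (hmax hz).lt_of_ne hzne⟩ fun h => lt_irrefl (w x₀) (h hx₀).2
  have hxmax : w x = w x₀ := le_antisymm (hmax hxΩ) (not_lt.1 fun h => hxV ⟨hxΩ, h⟩)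
  have hgrad : ∇ w x = 0 := gradient_eq_zero_of_isLocalMax <| by
    filter_upwards [hΩ.mem_nhds hxΩ] with v hv using hxmax ▸ hmax hv
  have hxy : x ≠ y := by rintro rfl; exact hxV hy
  have h := inner_gradient_pos_of_isEllipticSubsolutionAt hlam (dist_pos.2 hxy) rfl
    (fun v hv => hdiff v (hball hv)) (fun v hv => hsub v (hball (ball_subset_closedBall hv)))
    fun v hv => hxmax ▸ (hballV hv).2
  simp [hgrad] at h

theorem isMaxOn_closure_of_gradient_eq_zero (hlam : 0 < lam) (hΩ : IsOpen Ω)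
    (hΩc : IsPreconnected Ω) (hΩb : Bornology.IsBounded Ω) (hball : InteriorBallCondition Ω)
    (hdiff : ∀ x ∈ closure Ω, DifferentiableAt ℝ w x)
    (hsub : ∀ x ∈ Ω, IsEllipticSubsolutionAt lam Lam K w x)
    (hgrad : ∀ x ∈ closure Ω, IsMaxOn w (closure Ω) x → ∇ w x = 0) :
    ∀ x ∈ Ω, IsMaxOn w (closure Ω) x := by
  intro x hx
  obtain ⟨x₀, hx₀, hmax⟩ := hΩb.isCompact_closure.exists_isMaxOn ⟨x, subset_closure hx⟩
    fun z hz => (hdiff z hz).continuousAt.continuousWithinAt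
  by_cases hint : ∃ z ∈ Ω, w z = w x₀
  · obtain ⟨z, hz, hzx₀⟩ := hint
    have hzmax : IsMaxOn w (closure Ω) z := fun v hv => (hmax hv).trans hzx₀.ge
    have hxz := eq_of_isMaxOn_of_isEllipticSubsolutionAt hlam hΩ hΩc hsub hz
      (hzmax.on_subset subset_closure) x hx
    exact fun v hv => (hzmax hv).trans hxz.ge
  push Not at hint
  obtain ⟨y, hyx₀, hyball⟩ := hball x₀ (hΩ.frontier_eq ▸ ⟨hx₀, fun h => hint x₀ h rfl⟩)
  have hR : 0 < dist x₀ y := dist_pos.2 hyx₀.symm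
  have hclosedBall : closedBall y (dist x₀ y) ⊆ closure Ω :=
    closure_ball y hR.ne' ▸ closure_mono hyball
  have h := inner_gradient_pos_of_isEllipticSubsolutionAt hlam hR rfl
    (fun v hv => hdiff v (hclosedBall hv)) (fun v hv => hsub v (hyball hv))
    fun v hv => (hmax (subset_closure (hyball hv))).lt_of_ne (hint v (hyball hv))
  simp [hgrad x₀ hx₀ hmax] at h

end Elliptic

section Lorentz

variable {E : Type*} [NormedAddCommGroup E]

theorem one_sub_norm_sq_pos {p : E} (hp : ‖p‖ < 1) : 0 < 1 - ‖p‖ ^ 2 :=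
  sub_pos.2 ((sq_lt_one_iff_abs_lt_one _).2 (by rwa [abs_norm]))

variable [InnerProductSpace ℝ E]

/-- The Lorentz mean curvature operator in nondivergence form with frozen gradient `p`: the
contraction of `H` with the coefficient matrix `sMat`. -/
def lorentzForm (p : E) : (E →L[ℝ] E) →ₗ[ℝ] ℝ where
  toFun H := (LinearMap.trace ℝ E H + ⟪p, H p⟫ / (1 - ‖p‖ ^ 2)) / √(1 - ‖p‖ ^ 2)
  map_add' H H' := by
    simp only [ContinuousLinearMap.toLinearMap_add, map_add, add_apply, inner_add_right]
    ring
  map_smul' c H := by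
    simp only [ContinuousLinearMap.toLinearMap_smul, map_smul, smul_apply, inner_smul_right,
      smul_eq_mul, RingHom.id_apply]
    ring

theorem lorentzForm_apply (p : E) (H : E →L[ℝ] E) : lorentzForm p H =
    (LinearMap.trace ℝ E H + ⟪p, H p⟫ / (1 - ‖p‖ ^ 2)) / √(1 - ‖p‖ ^ 2) :=
  rfl

theorem hasFDerivAt_inv_sqrt_smul {p : E} (hp : ‖p‖ < 1) :
    HasFDerivAt (fun q : E => (√(1 - ‖q‖ ^ 2))⁻¹ • q)
      ((√(1 - ‖p‖ ^ 2))⁻¹ • (.id ℝ E + (1 - ‖p‖ ^ 2)⁻¹ • rankOne ℝ p p)) p := by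
  have hpos := one_sub_norm_sq_pos hp
  have hs : 0 < √(1 - ‖p‖ ^ 2) := Real.sqrt_pos.2 hpos
  have hsqrt := ((hasFDerivAt_id p).norm_sq.const_sub 1).sqrt hpos.ne'
  refine (((hasDerivAt_inv hs.ne').comp_hasFDerivAt p hsqrt).smul
    (hasFDerivAt_id p)).congr_fderiv ?_
  ext ξ
  rw [← Real.sq_sqrt hpos.le]
  simp only [id_eq, Function.comp_apply, Real.sqrt_nonneg, Real.sqrt_sq, one_div, mul_inv_rev,
    ContinuousLinearMap.comp_id, smul_neg, neg_smul, neg_neg, add_apply, smul_apply,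
    ContinuousLinearMap.id_apply, ContinuousLinearMap.smulRight_apply, coe_innerSL_apply,
    nsmul_eq_mul, Nat.cast_ofNat, smul_eq_mul, smul_add, rankOne_apply, add_right_inj]
  module

variable [FiniteDimensional ℝ E]

theorem trace_rankOne_comp (p : E) (H : E →L[ℝ] E) :
    LinearMap.trace ℝ E (rankOne ℝ p p ∘L H : E →L[ℝ] E) = ⟪p, H p⟫ := by
  have : ((rankOne ℝ p p ∘L H : E →L[ℝ] E) : E →ₗ[ℝ] E) =
      ((innerSL ℝ p ∘L H : E →L[ℝ] ℝ) : E →ₗ[ℝ] ℝ).smulRight p := by ext; simp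
  rw [this, LinearMap.trace_smulRight]
  simp

theorem trace_nonneg_of_inner_nonneg {H : E →L[ℝ] E} (hH : ∀ ξ, 0 ≤ ⟪ξ, H ξ⟫) :
    0 ≤ LinearMap.trace ℝ E H := by
  rw [LinearMap.trace_eq_sum_inner _ (stdOrthonormalBasis ℝ E)]
  exact Finset.sum_nonneg fun i _ => hH _

theorem isElliptic_lorentzForm {p : E} {ρ : ℝ} (hp : ‖p‖ ≤ ρ) (hρ : ρ < 1) :
    IsElliptic 1 ((Module.finrank ℝ E + ρ ^ 2 / (1 - ρ ^ 2)) / √(1 - ρ ^ 2))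
      (lorentzForm p) where
  nonneg H hH := by
    have := one_sub_norm_sq_pos (hp.trans_lt hρ)
    exact div_nonneg (add_nonneg (trace_nonneg_of_inner_nonneg hH) (div_nonneg (hH p) this.le))
      (Real.sqrt_nonneg _)
  rankOne_ge ξ := by
    have hpos := one_sub_norm_sq_pos (hp.trans_lt hρ)
    have hs : √(1 - ‖p‖ ^ 2) ≤ 1 := Real.sqrt_le_one.2 (sub_le_self _ (sq_nonneg _))
    have hξ : 0 ≤ ⟪p, rankOne ℝ ξ ξ p⟫ := by
      rw [rankOne_apply, real_inner_smul_right, real_inner_comm]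
      exact mul_self_nonneg _
    rw [one_mul, lorentzForm_apply, trace_rankOne, real_inner_self_eq_norm_sq]
    calc ‖ξ‖ ^ 2 ≤ ‖ξ‖ ^ 2 / √(1 - ‖p‖ ^ 2) :=
          le_div_self (sq_nonneg _) (Real.sqrt_pos.2 hpos) hs
      _ ≤ _ := by
          gcongr
          exact le_add_of_nonneg_right (div_nonneg hξ hpos.le)
  id_le := by
    have hρpos : 0 < 1 - ρ ^ 2 := by nlinarith [norm_nonneg p]
    rw [lorentzForm_apply, ContinuousLinearMap.coe_id, LinearMap.trace_id,
      ContinuousLinearMap.id_apply, real_inner_self_eq_norm_sq]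
    gcongr

theorem exists_abs_lorentzForm_sub_le (E : Type*) [NormedAddCommGroup E] [InnerProductSpace ℝ E]
    [FiniteDimensional ℝ E] {ρ : ℝ} (hρ : ρ < 1) (R : ℝ) :
    ∃ K : ℝ≥0, ∀ (p q : E) (H : E →L[ℝ] E), ‖p‖ ≤ ρ → ‖q‖ ≤ ρ → ‖H‖ ≤ R →
      |lorentzForm p H - lorentzForm q H| ≤ K * ‖p - q‖ := by
  have hsmooth : ContDiffOn ℝ 1 (fun z : E × (E →L[ℝ] E) => lorentzForm z.1 z.2)
      (closedBall 0 ρ ×ˢ closedBall 0 R) := by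
    intro z hz
    have hpos := one_sub_norm_sq_pos ((mem_closedBall_zero_iff.1 hz.1).trans_lt hρ)
    have htrace : ContDiff ℝ 1 fun z : E × (E →L[ℝ] E) => LinearMap.trace ℝ E z.2 := by
      simp only [LinearMap.trace_eq_sum_inner _ (stdOrthonormalBasis ℝ E)]
      exact ContDiff.sum fun i _ => contDiff_const.inner ℝ (contDiff_snd.clm_apply contDiff_const)
    have hinner : ContDiff ℝ 1 fun z : E × (E →L[ℝ] E) => ⟪z.1, z.2 z.1⟫ :=
      contDiff_fst.inner ℝ (contDiff_snd.clm_apply contDiff_fst)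
    have hnorm : ContDiff ℝ 1 fun z : E × (E →L[ℝ] E) => 1 - ‖z.1‖ ^ 2 :=
      contDiff_const.sub (contDiff_fst.norm_sq ℝ)
    exact ((htrace.contDiffAt.add (hinner.contDiffAt.div hnorm.contDiffAt hpos.ne')).div
      (hnorm.contDiffAt.sqrt hpos.ne') (Real.sqrt_pos.2 hpos).ne').contDiffWithinAt
  obtain ⟨K, hK⟩ := hsmooth.exists_lipschitzOnWith one_ne_zero
    ((convex_closedBall _ _).prod (convex_closedBall _ _))
    ((isCompact_closedBall _ _).prod (isCompact_closedBall _ _))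
  refine ⟨K, fun p q H hp hq hH => ?_⟩
  have h := hK.dist_le_mul (p, H) ⟨by simpa using hp, by simpa using hH⟩
    (q, H) ⟨by simpa using hq, by simpa using hH⟩
  simpa [Prod.dist_eq, dist_eq_norm] using h

theorem isEllipticSubsolutionAt_sub {u v : E → ℝ} {x : E} {ρ : ℝ} {K : ℝ≥0}
    (hu : ContDiffAt ℝ 2 u x) (hv : ContDiffAt ℝ 2 v x) (hux : ‖∇ u x‖ ≤ ρ) (hρ : ρ < 1)
    (hK : |lorentzForm (∇ u x) (fderiv ℝ (∇ v) x) - lorentzForm (∇ v x) (fderiv ℝ (∇ v) x)| ≤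
      K * ‖∇ u x - ∇ v x‖)
    (huv : lorentzForm (∇ v x) (fderiv ℝ (∇ v) x) ≤ lorentzForm (∇ u x) (fderiv ℝ (∇ u) x)) :
    IsEllipticSubsolutionAt 1
      ((Module.finrank ℝ E + ρ ^ 2 / (1 - ρ ^ 2)) / √(1 - ρ ^ 2)) K (u - v) x := by
  refine ⟨hu.sub hv, lorentzForm (∇ u x), isElliptic_lorentzForm hux hρ, ?_⟩
  rw [fderiv_gradient_sub hu hv, map_sub, gradient_sub (hu.differentiableAt two_ne_zero)
    (hv.differentiableAt two_ne_zero)]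
  linarith [(abs_le.1 hK).2]

theorem MOp_eq_lorentzForm {n : ℕ} {u : EuclideanSpace ℝ (Fin n) → ℝ}
    {x : EuclideanSpace ℝ (Fin n)} (hu : ContDiffAt ℝ 2 u x) (hx : ‖∇ u x‖ < 1) :
    MOp n u x = lorentzForm (∇ u x) (fderiv ℝ (∇ u) x) := by
  set H := fderiv ℝ (∇ u) x
  set D := (√(1 - ‖∇ u x‖ ^ 2))⁻¹ •
    (H + (1 - ‖∇ u x‖ ^ 2)⁻¹ • (rankOne ℝ (∇ u x) (∇ u x) ∘L H)) with hD
  have hflux : HasFDerivAt (fun y => (√(1 - ‖∇ u y‖ ^ 2))⁻¹ • ∇ u y) D x :=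
    (hasFDerivAt_inv_sqrt_smul hx).comp x (differentiableAt_gradient hu).hasFDerivAt
  have hterm : ∀ i, fderiv ℝ (fun y => fderiv ℝ u y (ev n i) /
      √(1 - ‖gradient u y‖ ^ 2)) x (ev n i) = ⟪ev n i, D (ev n i)⟫ := by
    intro i
    have hcomp : (fun y => fderiv ℝ u y (ev n i) / √(1 - ‖gradient u y‖ ^ 2)) =
        fun y => ⟪ev n i, (√(1 - ‖∇ u y‖ ^ 2))⁻¹ • ∇ u y⟫ := by
      funext y
      rw [real_inner_smul_right, real_inner_comm, inner_gradient_left, div_eq_inv_mul]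
    rw [hcomp]
    exact congrArg (· (ev n i)) ((innerSL ℝ (ev n i)).hasFDerivAt.comp x hflux).fderiv
  have htrace : MOp n u x = LinearMap.trace ℝ _ (D : EuclideanSpace ℝ (Fin n) →ₗ[ℝ] _) := by
    rw [LinearMap.trace_eq_sum_inner _ (EuclideanSpace.basisFun (Fin n) ℝ)]
    simp only [EuclideanSpace.basisFun_apply]
    exact Finset.sum_congr rfl fun i _ => hterm i
  rw [htrace, hD, ContinuousLinearMap.toLinearMap_smul, ContinuousLinearMap.toLinearMap_add,
    ContinuousLinearMap.toLinearMap_smul, map_smul, map_add, map_smul, trace_rankOne_comp,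
    lorentzForm_apply, smul_eq_mul, smul_eq_mul]
  ring

end Lorentz

section SecondBoundaryValueProblem

variable {n : ℕ} {Ω Ω' : Set (EuclideanSpace ℝ (Fin n))} {u v : EuclideanSpace ℝ (Fin n) → ℝ}
  {c c' : ℝ} {x : EuclideanSpace ℝ (Fin n)}

theorem SmoothOnClosure.contDiffAt (hu : SmoothOnClosure n Ω u) (hx : x ∈ closure Ω) :
    ContDiffAt ℝ (⊤ : ℕ∞) u x := by
  obtain ⟨U, hU, hΩU, hu⟩ := hu
  exact hu.contDiffAt (hU.mem_nhds (hΩU hx))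

theorem SmoothOnClosure.contDiffAt_two (hu : SmoothOnClosure n Ω u) (hx : x ∈ closure Ω) :
    ContDiffAt ℝ 2 u x :=
  contDiffAt_infty.1 (hu.contDiffAt hx) 2

theorem SmoothOnClosure.continuousOn_gradient (hu : SmoothOnClosure n Ω u) :
    ContinuousOn (∇ u) (closure Ω) := fun _ hx =>
  (contDiffAt_gradient (m := (⊤ : ℕ∞)) (hu.contDiffAt hx)).continuousAt.continuousWithinAt

theorem SmoothOnClosure.continuousOn_fderiv_gradient (hu : SmoothOnClosure n Ω u) :
    ContinuousOn (fderiv ℝ (∇ u)) (closure Ω) := fun _ hx =>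
  ((contDiffAt_gradient (m := (⊤ : ℕ∞)) (hu.contDiffAt hx)).fderiv_right
    (m := 0) (by simp)).continuousAt.continuousWithinAt

theorem IsSol.image_closure (hΩb : Bornology.IsBounded Ω) (hu : IsSol n Ω Ω' u c) :
    ∇ u '' closure Ω = closure Ω' := by
  rw [image_closure_of_isCompact hΩb.isCompact_closure hu.1.continuousOn_gradient,
    hu.2.2.2.1.image_eq]

theorem IsSol.gradient_eq_of_isMaxOn_sub (hΩc : Convex ℝ Ω) (hΩb : Bornology.IsBounded Ω)
    (hu : IsSol n Ω Ω' u c) (hv : IsSol n Ω Ω' v c') (hx : x ∈ closure Ω)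
    (hmax : IsMaxOn (u - v) (closure Ω) x) : ∇ u x = ∇ v x := by
  have hux : ∇ u x ∈ ∇ v '' closure Ω := by
    rw [hv.image_closure hΩb, ← hu.image_closure hΩb]
    exact mem_image_of_mem _ hx
  exact _root_.gradient_eq_of_isMaxOn_sub hΩc.closure
    ((hu.1.contDiffAt_two hx).differentiableAt two_ne_zero)
    ((hv.1.contDiffAt_two hx).differentiableAt two_ne_zero)
    (fun z hz => differentiableAt_gradient (hv.1.contDiffAt_two hz)) hv.2.2.1 hx hux hmax

theorem IsSol.exists_isEllipticSubsolutionAt_sub (hΩb : Bornology.IsBounded Ω)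
    (hu : IsSol n Ω Ω' u c) (hv : IsSol n Ω Ω' v c') (hc : c' ≤ c) :
    ∃ Lam K, ∀ x ∈ Ω, IsEllipticSubsolutionAt 1 Lam K (u - v) x := by
  have hΩ'ball : closure Ω' ⊆ ball 0 1 := by
    rw [← hu.image_closure hΩb, image_subset_iff]
    exact fun x hx => mem_ball_zero_iff.2 (hu.2.1 x hx)
  obtain ⟨ρ, ⟨-, hρ⟩, hΩ'ρ⟩ := exists_pos_lt_subset_ball one_pos isClosed_closure hΩ'ball
  have hbound : ∀ {w b}, IsSol n Ω Ω' w b → ∀ x ∈ closure Ω, ‖∇ w x‖ ≤ ρ := fun hw x hx =>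
    (mem_ball_zero_iff.1 (hΩ'ρ (hw.image_closure hΩb ▸ mem_image_of_mem _ hx))).le
  obtain ⟨R, hR⟩ :=
    hΩb.isCompact_closure.exists_bound_of_continuousOn hv.1.continuousOn_fderiv_gradient
  obtain ⟨K, hK⟩ := exists_abs_lorentzForm_sub_le (EuclideanSpace ℝ (Fin n)) hρ R
  refine ⟨(Module.finrank ℝ (EuclideanSpace ℝ (Fin n)) + ρ ^ 2 / (1 - ρ ^ 2)) / √(1 - ρ ^ 2), K,
    fun x hxΩ => ?_⟩
  have hx := subset_closure hxΩ
  have hu2 := hu.1.contDiffAt_two hx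
  have hv2 := hv.1.contDiffAt_two hx
  refine isEllipticSubsolutionAt_sub hu2 hv2 (hbound hu x hx) hρ
    (hK _ _ _ (hbound hu x hx) (hbound hv x hx) (hR x hx)) ?_
  rw [← MOp_eq_lorentzForm hu2 (hu.2.1 x hx), ← MOp_eq_lorentzForm hv2 (hv.2.1 x hx),
    hu.2.2.2.2 x hxΩ, hv.2.2.2.2 x hxΩ]
  exact hc

theorem IsSol.eqOn_gradient_of_le (hΩ : IsOpen Ω) (hΩc : Convex ℝ Ω)
    (hΩb : Bornology.IsBounded Ω) (hball : InteriorBallCondition Ω) (hu : IsSol n Ω Ω' u c)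
    (hv : IsSol n Ω Ω' v c') (hc : c' ≤ c) : EqOn (∇ u) (∇ v) Ω := by
  have hdiff : ∀ {w b}, IsSol n Ω Ω' w b → ∀ x ∈ closure Ω, DifferentiableAt ℝ w x :=
    fun hw x hx => (hw.1.contDiffAt_two hx).differentiableAt two_ne_zero
  have hcrit : ∀ x ∈ closure Ω, IsMaxOn (u - v) (closure Ω) x → ∇ (u - v) x = 0 :=
    fun x hx hmax => by
      rw [gradient_sub (hdiff hu x hx) (hdiff hv x hx), sub_eq_zero]
      exact hu.gradient_eq_of_isMaxOn_sub hΩc hΩb hv hx hmax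
  obtain ⟨Lam, K, hsub⟩ := hu.exists_isEllipticSubsolutionAt_sub hΩb hv hc
  have hmax := isMaxOn_closure_of_gradient_eq_zero one_pos hΩ hΩc.isPreconnected hΩb hball
    (fun x hx => (hdiff hu x hx).sub (hdiff hv x hx)) hsub hcrit
  exact fun x hx => hu.gradient_eq_of_isMaxOn_sub hΩc hΩb hv (subset_closure hx) (hmax x hx)

theorem IsSol.eqOn_gradient (hΩ : IsOpen Ω) (hΩc : Convex ℝ Ω) (hΩb : Bornology.IsBounded Ω)
    (hball : InteriorBallCondition Ω) (hu : IsSol n Ω Ω' u c) (hv : IsSol n Ω Ω' v c') :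
    EqOn (∇ u) (∇ v) Ω := by
  rcases le_total c' c with hc | hc
  · exact hu.eqOn_gradient_of_le hΩ hΩc hΩb hball hv hc
  · exact (hv.eqOn_gradient_of_le hΩ hΩc hΩb hball hu hc).symm

theorem IsSol.eqOn_fderiv_gradient (hΩ : IsOpen Ω) (hΩc : Convex ℝ Ω)
    (hΩb : Bornology.IsBounded Ω) (hball : InteriorBallCondition Ω) (hu : IsSol n Ω Ω' u c)
    (hv : IsSol n Ω Ω' v c') : EqOn (fderiv ℝ (∇ u)) (fderiv ℝ (∇ v)) (closure Ω) := by
  have hopen : EqOn (fderiv ℝ (∇ u)) (fderiv ℝ (∇ v)) Ω := fun x hx =>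
    ((hu.eqOn_gradient hΩ hΩc hΩb hball hv).eventuallyEq_of_mem (hΩ.mem_nhds hx)).fderiv_eq
  exact hopen.of_subset_closure hu.1.continuousOn_fderiv_gradient
    hv.1.continuousOn_fderiv_gradient subset_closure subset_rfl

theorem statement16_general (hΩ : IsOpen Ω) (hΩc : Convex ℝ Ω) (hΩb : Bornology.IsBounded Ω)
    (hball : InteriorBallCondition Ω) (Ω' : Set (EuclideanSpace ℝ (Fin n))) :
    ∃ C : ℝ, 0 < C ∧ ∀ u c, IsSol n Ω Ω' u c → ∀ x ∈ closure Ω, ∀ ξ,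
      1 / C * ‖ξ‖ ^ 2 ≤ ⟪ξ, fderiv ℝ (∇ u) x ξ⟫ ∧ ⟪ξ, fderiv ℝ (∇ u) x ξ⟫ ≤ C * ‖ξ‖ ^ 2 := by
  by_cases hex : ∃ v c', IsSol n Ω Ω' v c'
  · obtain ⟨v, c', hv⟩ := hex
    obtain ⟨C, hC, hpinch⟩ := exists_pinching_of_isCompact hΩb.isCompact_closure
      hv.1.continuousOn_fderiv_gradient hv.2.2.1
    refine ⟨C, hC, fun u c hu x hx ξ => ?_⟩
    rw [hu.eqOn_fderiv_gradient hΩ hΩc hΩb hball hv hx]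
    exact hpinch x hx ξ
  · exact ⟨1, one_pos, fun u c hu => absurd ⟨u, c, hu⟩ hex⟩

end SecondBoundaryValueProblem

end

/-- Lemma 3.6/4.8.  Uniform pinching of the Hessian:
`(1/C₃₇)|ξ|² ≤ ⟨ξ, D²u(x) ξ⟩ ≤ C₃₇|ξ|²` on the closure of `Ω`. -/
theorem statement16 (n : ℕ) (hn : 2 ≤ n) (Ω Ω' : Set (EuclideanSpace ℝ (Fin n)))
    (g h : EuclideanSpace ℝ (Fin n) → ℝ) (θ₁ θ₂ : ℝ)
    (hΩb : Bornology.IsBounded Ω) (hΩ'b : Bornology.IsBounded Ω')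
    (hΩ : IsUnifConvexDefFn n Ω g θ₁) (hΩ' : IsUnifConvexDefFn n Ω' h θ₂)
    (hsub : closure Ω' ⊆ Metric.ball (0 : EuclideanSpace ℝ (Fin n)) 1) :
    ∃ C₃₇ : ℝ, 0 < C₃₇ ∧
      ∀ (u : EuclideanSpace ℝ (Fin n) → ℝ) (c : ℝ), IsSol n Ω Ω' u c →
        ∀ x ∈ closure Ω, ∀ ξ : EuclideanSpace ℝ (Fin n),
          (1 / C₃₇) * ‖ξ‖ ^ 2 ≤ ⟪ξ, fderiv ℝ (gradient u) x ξ⟫ ∧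
          ⟪ξ, fderiv ℝ (gradient u) x ξ⟫ ≤ C₃₇ * ‖ξ‖ ^ 2 :=
  statement16_general hΩ.isOpen hΩ.convex hΩb hΩ.interiorBallCondition Ω'
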